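/- Suppose k(n)/√n → ∞ and one of the three regimes holds: (Flat) n^{3/2}V(A)/k → 0 and m/(k n^{1/2}) → c > 0; (Intermediate) n^{3/2}V(A)/k → λ > 0 and m/(k n^{1/2}) → c > 0; or (Hilly) n^{3/2}V(A)/k → ∞ and m/(V(A)n²) → c > 0. Then (n³/m³)·(Σ_{i=1}^n a_i⁴ − k⁴/n³) → 0 as n → ∞; that is, Σ_i a_i⁴ = k⁴/n³ + o(m³/n³). -/

import Mathlib

/-!
Write `a_i = μ + d_i` with `μ = k/n`, so that `Σ d_i = 0` and `Σ d_i² = n V(A)`. Expanding,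
`Σ a_i⁴ - k⁴/n³ = Σ d_i⁴ + 4μ Σ d_i³ + 6μ² Σ d_i²`, and since `|4μ d³| ≤ 2d⁴ + 2μ²d²` and
`Σ d_i⁴ ≤ (Σ d_i²)²`, this is at most `3 (nV)² + 8 μ² nV` in absolute value
(`abs_fourth_sum_le`).

In each of the three regimes there is a constant `C` such that eventually `k √n ≤ C m` and
`V n² ≤ C m` (`exists_const_of_ratio_limits` and `exists_const_of_hilly`). With these two bounds
the normalised error is at most `3C³ √n/k + 8C³/n` (`abs_normalised_le`), which tends to zero
because `k/√n → ∞`.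
-/

open Finset Filter Topology

/-- Probability of configuration `z` of `m` balls in `n` bins under the standard
(uniform multinomial) distribution ST(m,n). -/
noncomputable def stProb (n m : ℕ) (z : Fin n → ℕ) : ℝ :=
  if ∑ i, z i = m then
    ((Nat.factorial m : ℝ) / ∏ i, (Nat.factorial (z i) : ℝ)) * ((n : ℝ))⁻¹ ^ m
  else 0

/-- Probability of configuration `z` of `m` balls in `n` bins under the planted
distribution PL_A(m,n) with planting `a`. -/
noncomputable def plProb (n m : ℕ) (a : Fin n → ℕ) (z : Fin n → ℕ) : ℝ :=
  if (∑ i, z i = m) ∧ (∀ i, a i ≤ z i) then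
    ((Nat.factorial (m - ∑ i, a i) : ℝ) / ∏ i, (Nat.factorial (z i - a i) : ℝ)) *
      ((n : ℝ))⁻¹ ^ (m - ∑ i, a i)
  else 0

/-- Expectation of a statistic `T` with respect to a probability function `p` on
configurations. -/
noncomputable def expec {n : ℕ} (p : (Fin n → ℕ) → ℝ) (T : (Fin n → ℕ) → ℝ) : ℝ :=
  ∑' z : Fin n → ℕ, p z * T z

/-- Variance of a statistic `T` with respect to a probability function `p`. -/
noncomputable def varOf {n : ℕ} (p : (Fin n → ℕ) → ℝ) (T : (Fin n → ℕ) → ℝ) : ℝ :=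
  ∑' z : Fin n → ℕ, p z * (T z - expec p T) ^ 2

/-- Probability of a set `s` of configurations with respect to a probability
function `p`. -/
noncomputable def probOf {n : ℕ} (p : (Fin n → ℕ) → ℝ) (s : Set (Fin n → ℕ)) : ℝ :=
  ∑' z : Fin n → ℕ, Set.indicator s p z

/-- `V(A) = (Σ_i a_i²)/n − k²/n²` where `k = Σ_i a_i`. -/
noncomputable def plantV (n : ℕ) (a : Fin n → ℕ) : ℝ :=
  (∑ i, (a i : ℝ) ^ 2) / n - ((∑ i, (a i : ℝ)) / n) ^ 2

/-- `q_i = (n/m)(z_i − m/n)`. -/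
noncomputable def qStat (n m : ℕ) (z : Fin n → ℕ) (i : Fin n) : ℝ :=
  ((n : ℝ) / m) * ((z i : ℝ) - (m : ℝ) / n)

/-- The Hilly-regime statistic `H_A(Z) = Σ_i a_i q_i`. -/
noncomputable def HStat (n m : ℕ) (a : Fin n → ℕ) (z : Fin n → ℕ) : ℝ :=
  ∑ i, (a i : ℝ) * qStat n m z i

/-- The Flat-regime statistic `F_A(Z) = Σ_i a_i q_i²`. -/
noncomputable def FStat (n m : ℕ) (a : Fin n → ℕ) (z : Fin n → ℕ) : ℝ :=
  ∑ i, (a i : ℝ) * qStat n m z i ^ 2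

/-- The Intermediate-regime statistic `I_A(Z) = Σ_i a_i q_i − (1/2) Σ_i a_i q_i²`. -/
noncomputable def IStat (n m : ℕ) (a : Fin n → ℕ) (z : Fin n → ℕ) : ℝ :=
  HStat n m a z - (1/2) * FStat n m a z

/-- The standard normal cumulative distribution function `Φ`. -/
noncomputable def stdNormalCDF (x : ℝ) : ℝ :=
  ∫ t in Set.Iic x, Real.exp (-t ^ 2 / 2) / Real.sqrt (2 * Real.pi)

/-- Total variation distance `TV_A(m,n)` between ST(m,n) and PL_A(m,n). -/
noncomputable def tvDist (n m : ℕ) (a : Fin n → ℕ) : ℝ :=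
  (1/2) * ∑' z : Fin n → ℕ, |stProb n m z - plProb n m a z|

/-- The Flat regime: `n^{3/2} V(A)/k → 0` and `m/(k n^{1/2}) → c`. -/
def FlatRegime (A : (n : ℕ) → Fin n → ℕ) (m k : ℕ → ℕ) (c : ℝ) : Prop :=
  Tendsto (fun n : ℕ => (n : ℝ) ^ ((3 : ℝ)/2) * plantV n (A n) / (k n : ℝ)) atTop (𝓝 0) ∧
  Tendsto (fun n : ℕ => (m n : ℝ) / ((k n : ℝ) * Real.sqrt n)) atTop (𝓝 c)

/-- The Intermediate regime: `n^{3/2} V(A)/k → λ` and `m/(k n^{1/2}) → c`. -/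
def IntermediateRegime (A : (n : ℕ) → Fin n → ℕ) (m k : ℕ → ℕ) (lam c : ℝ) : Prop :=
  Tendsto (fun n : ℕ => (n : ℝ) ^ ((3 : ℝ)/2) * plantV n (A n) / (k n : ℝ)) atTop (𝓝 lam) ∧
  Tendsto (fun n : ℕ => (m n : ℝ) / ((k n : ℝ) * Real.sqrt n)) atTop (𝓝 c)

/-- The Hilly regime: `n^{3/2} V(A)/k → ∞` and `m/(V(A) n²) → c`. -/
def HillyRegime (A : (n : ℕ) → Fin n → ℕ) (m k : ℕ → ℕ) (c : ℝ) : Prop :=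
  Tendsto (fun n : ℕ => (n : ℝ) ^ ((3 : ℝ)/2) * plantV n (A n) / (k n : ℝ)) atTop atTop ∧
  Tendsto (fun n : ℕ => (m n : ℝ) / (plantV n (A n) * (n : ℝ) ^ 2)) atTop (𝓝 c)

/-- One of the three regimes holds (with its positive constants). -/
def SomeRegime (A : (n : ℕ) → Fin n → ℕ) (m k : ℕ → ℕ) : Prop :=
  (∃ c : ℝ, 0 < c ∧ FlatRegime A m k c) ∨
  (∃ lam c : ℝ, 0 < lam ∧ 0 < c ∧ IntermediateRegime A m k lam c) ∨
  (∃ c : ℝ, 0 < c ∧ HillyRegime A m k c)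

lemma sum_dev_sq {n : ℕ} (hn : 0 < n) (a : Fin n → ℕ) (k : ℕ) (hk : ∑ i, a i = k) :
    ∑ i, ((a i : ℝ) - k / n) ^ 2 = n * plantV n a := by
  have hn' : (n : ℝ) ≠ 0 := by positivity
  have hs : ∑ i, (a i : ℝ) = k := by exact_mod_cast hk
  have : ∀ i, ((a i : ℝ) - k / n) ^ 2 = (a i : ℝ) ^ 2 - 2 * (k / n) * a i + (k / n : ℝ) ^ 2 :=
    fun i => by ring
  simp only [this, sum_add_distrib, sum_sub_distrib, ← mul_sum, hs, plantV]
  simp only [sum_const, card_univ, Fintype.card_fin, nsmul_eq_mul]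
  field_simp
  ring

lemma abs_fourth_sum_le {n : ℕ} (hn : 0 < n) (a : Fin n → ℕ) (k : ℕ) (hk : ∑ i, a i = k) :
    |(∑ i, (a i : ℝ) ^ 4) - (k : ℝ) ^ 4 / (n : ℝ) ^ 3| ≤
      3 * (n * plantV n a) ^ 2 + 8 * (k / n : ℝ) ^ 2 * (n * plantV n a) := by
  have hn' : (n : ℝ) ≠ 0 := by positivity
  have hs : ∑ i, (a i : ℝ) = k := by exact_mod_cast hk
  have key := sum_dev_sq hn a k hk
  have h4 : ∑ i, ((a i : ℝ) - k / n) ^ 4 ≤ (n * plantV n a) ^ 2 := by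
    rw [← key]
    have := sum_sq_le_sq_sum_of_nonneg (s := univ) (f := fun i => ((a i : ℝ) - k / n) ^ 2)
      (fun i _ => sq_nonneg _)
    calc _ = ∑ i, (((a i : ℝ) - k / n) ^ 2) ^ 2 := by
          refine sum_congr rfl fun i _ => by ring
      _ ≤ _ := this
  -- The linear term `4μ³ d_i` sums to zero, so it can be subtracted termwise.
  have hexp : (∑ i, (a i : ℝ) ^ 4) - (k : ℝ) ^ 4 / (n : ℝ) ^ 3 =
      ∑ i, ((a i : ℝ) ^ 4 - (k / n : ℝ) ^ 4 - 4 * (k / n : ℝ) ^ 3 * (a i - k / n)) := by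
    simp only [sum_sub_distrib, ← mul_sum, hs]
    simp only [sum_const, card_univ, Fintype.card_fin, nsmul_eq_mul]
    field_simp
    ring
  rw [hexp]
  calc _ ≤ ∑ i, |(a i : ℝ) ^ 4 - (k / n : ℝ) ^ 4 - 4 * (k / n : ℝ) ^ 3 * (a i - k / n)| :=
        abs_sum_le_sum_abs _ _
    _ ≤ ∑ i, (3 * ((a i : ℝ) - k / n) ^ 4 + 8 * (k / n : ℝ) ^ 2 * ((a i : ℝ) - k / n) ^ 2) := by
        refine sum_le_sum fun i _ => ?_
        generalize (k / n : ℝ) = u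
        obtain ⟨d, hd⟩ : ∃ d, d = (a i : ℝ) - u := ⟨_, rfl⟩
        have ha : (a i : ℝ) = u + d := by linarith
        rw [ha]
        -- Both signs come from `2 d² (d ∓ u)² ≥ 0` up to nonnegative multiples of `d⁴`, `u² d²`.
        rw [abs_le]
        constructor
        · nlinarith [sq_nonneg (d * (d + u)), sq_nonneg (d ^ 2), sq_nonneg (u * d)]
        · nlinarith [sq_nonneg (d * (d - u)), sq_nonneg (d ^ 2), sq_nonneg (u * d)]
    _ = 3 * ∑ i, ((a i : ℝ) - k / n) ^ 4 + 8 * (k / n : ℝ) ^ 2 * (n * plantV n a) := by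
        rw [sum_add_distrib, ← mul_sum, ← mul_sum, key]
    _ ≤ _ := by linarith

lemma plantV_nonneg {n : ℕ} (hn : 0 < n) (a : Fin n → ℕ) : 0 ≤ plantV n a := by
  have h := sum_dev_sq hn a _ rfl
  have h' : 0 ≤ (n : ℝ) * plantV n a := h ▸ sum_nonneg fun i _ => sq_nonneg _
  exact nonneg_of_mul_nonneg_right h' (by positivity)

lemma abs_normalised_le {n : ℕ} (hn : 0 < n) (a : Fin n → ℕ) (m k : ℕ) (hka : ∑ i, a i = k)
    (hk : 0 < k) {C : ℝ} (hC : 0 < C) (h1 : (k : ℝ) * Real.sqrt n ≤ C * m)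
    (h2 : plantV n a * (n : ℝ) ^ 2 ≤ C * m) :
    |(n : ℝ) ^ 3 / (m : ℝ) ^ 3 * ((∑ i, (a i : ℝ) ^ 4) - (k : ℝ) ^ 4 / (n : ℝ) ^ 3)| ≤
      3 * C ^ 3 * (k / Real.sqrt n : ℝ)⁻¹ + 8 * C ^ 3 * (n : ℝ)⁻¹ := by
  have hV := plantV_nonneg hn a
  have hE := abs_fourth_sum_le hn a k hka
  generalize plantV n a = V at *
  generalize (∑ i, (a i : ℝ) ^ 4) - (k : ℝ) ^ 4 / (n : ℝ) ^ 3 = E at *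
  have hN : (0 : ℝ) < n := by exact_mod_cast hn
  have hK : (0 : ℝ) < k := by exact_mod_cast hk
  obtain ⟨s, hs⟩ : ∃ s, s = Real.sqrt n := ⟨_, rfl⟩
  have hs0 : 0 < s := hs ▸ Real.sqrt_pos.2 hN
  have hns : (n : ℝ) = s ^ 2 := by rw [hs, Real.sq_sqrt hN.le]
  rw [← hs] at h1 ⊢
  rw [hns] at h2 hE ⊢
  have hM : (0 : ℝ) < m := by
    have : 0 < C * (m : ℝ) := lt_of_lt_of_le (by positivity) h1
    exact pos_of_mul_pos_right this hC.le
  generalize (m : ℝ) = M at *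
  generalize (k : ℝ) = K at *
  rw [abs_mul, abs_of_nonneg (by positivity : 0 ≤ (s ^ 2) ^ 3 / M ^ 3)]
  have hW0 : 0 ≤ V * (s ^ 2) ^ 2 := by positivity
  calc _ ≤ (s ^ 2) ^ 3 / M ^ 3 * (3 * (s ^ 2 * V) ^ 2 + 8 * (K / s ^ 2) ^ 2 * (s ^ 2 * V)) := by
        gcongr
    _ = 3 * s ^ 2 * (V * (s ^ 2) ^ 2) ^ 2 / M ^ 3
          + 8 * (K * s) ^ 2 * (V * (s ^ 2) ^ 2) / (s ^ 2 * M ^ 3) := by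
        field_simp
    _ ≤ 3 * s ^ 2 * (C * M) ^ 2 / M ^ 3 + 8 * (C * M) ^ 2 * (C * M) / (s ^ 2 * M ^ 3) := by
        generalize V * (s ^ 2) ^ 2 = W at h2 hW0 ⊢
        generalize C * M = D at h1 h2 ⊢
        gcongr
    _ = 3 * C ^ 2 * (s / (K * M)) * (K * s) + 8 * C ^ 3 * (s ^ 2)⁻¹ := by
        field_simp
    _ ≤ 3 * C ^ 2 * (s / (K * M)) * (C * M) + 8 * C ^ 3 * (s ^ 2)⁻¹ := by
        gcongr
    _ = _ := by
        field_simp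

lemma rpow_three_halves (n : ℕ) : (n : ℝ) ^ ((3 : ℝ) / 2) = Real.sqrt n ^ 3 := by
  rw [Real.sqrt_eq_rpow, ← Real.rpow_natCast, ← Real.rpow_mul (by positivity)]
  norm_num

/-- The Flat (`lam = 0`) and Intermediate regimes are treated together. -/
lemma exists_const_of_ratio_limits (A : (n : ℕ) → Fin n → ℕ) (m k : ℕ → ℕ) (lam c : ℝ)
    (hk : ∀ᶠ n in atTop, 0 < k n) (hlam : 0 ≤ lam) (hc : 0 < c)
    (h : IntermediateRegime A m k lam c) :
    ∃ C : ℝ, 0 < C ∧ ∀ᶠ n : ℕ in atTop, (k n : ℝ) * Real.sqrt n ≤ C * m n ∧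
      plantV n (A n) * (n : ℝ) ^ 2 ≤ C * m n := by
  refine ⟨(lam + 1) * (2 / c), by positivity, ?_⟩
  filter_upwards [hk, eventually_gt_atTop 0, h.1.eventually_le_const (lt_add_one lam),
    h.2.eventually_const_le (half_lt_self hc)] with n hk hn h1 h2
  have hN : (0 : ℝ) < n := by exact_mod_cast hn
  have hK : (0 : ℝ) < k n := by exact_mod_cast hk
  have hs0 : 0 < Real.sqrt n := Real.sqrt_pos.2 hN
  have hns : (n : ℝ) ^ 2 = Real.sqrt n ^ 4 := by
    rw [show Real.sqrt n ^ 4 = (Real.sqrt n ^ 2) ^ 2 by ring, Real.sq_sqrt hN.le]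
  rw [rpow_three_halves, div_le_iff₀ hK] at h1
  rw [le_div_iff₀ (by positivity)] at h2
  have h3 : (k n : ℝ) * Real.sqrt n ≤ 2 / c * m n := by
    calc _ = 2 / c * (c / 2 * (k n * Real.sqrt n)) := by field_simp
      _ ≤ _ := by gcongr
  constructor
  · have h0 : 0 ≤ 2 / c * (m n : ℝ) := by positivity
    nlinarith
  · calc _ = (Real.sqrt n ^ 3 * plantV n (A n)) * Real.sqrt n := by
          rw [hns]
          ring
      _ ≤ ((lam + 1) * k n) * Real.sqrt n := by gcongr
      _ = (lam + 1) * (k n * Real.sqrt n) := by ring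
      _ ≤ (lam + 1) * (2 / c * m n) := by gcongr
      _ = _ := by ring

lemma exists_const_of_hilly (A : (n : ℕ) → Fin n → ℕ) (m k : ℕ → ℕ) (c : ℝ)
    (hk : ∀ᶠ n in atTop, 0 < k n) (hc : 0 < c) (h : HillyRegime A m k c) :
    ∃ C : ℝ, 0 < C ∧ ∀ᶠ n : ℕ in atTop, (k n : ℝ) * Real.sqrt n ≤ C * m n ∧
      plantV n (A n) * (n : ℝ) ^ 2 ≤ C * m n := by
  refine ⟨2 / c, by positivity, ?_⟩
  filter_upwards [hk, eventually_gt_atTop 0, h.1.eventually_ge_atTop 1,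
    h.2.eventually_const_le (half_lt_self hc)] with n hk hn h1 h2
  have hN : (0 : ℝ) < n := by exact_mod_cast hn
  have hK : (0 : ℝ) < k n := by exact_mod_cast hk
  have hs0 : 0 < Real.sqrt n := Real.sqrt_pos.2 hN
  have hns : (n : ℝ) ^ 2 = Real.sqrt n ^ 4 := by
    rw [show Real.sqrt n ^ 4 = (Real.sqrt n ^ 2) ^ 2 by ring, Real.sq_sqrt hN.le]
  rw [rpow_three_halves, le_div_iff₀ hK, one_mul] at h1
  have hV : 0 < plantV n (A n) :=
    pos_of_mul_pos_right (lt_of_lt_of_le hK h1) (by positivity)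
  rw [le_div_iff₀ (by positivity)] at h2
  have h3 : plantV n (A n) * (n : ℝ) ^ 2 ≤ 2 / c * m n := by
    calc _ = 2 / c * (c / 2 * (plantV n (A n) * (n : ℝ) ^ 2)) := by field_simp
      _ ≤ _ := by gcongr
  refine ⟨le_trans ?_ h3, h3⟩
  calc _ ≤ (Real.sqrt n ^ 3 * plantV n (A n)) * Real.sqrt n := by gcongr
    _ = _ := by rw [hns]; ring

/-- in all three regimes, `Σ_i a_i⁴ = k⁴/n³ + o(m³/n³)`. -/
theorem fourth_power_sum_asymptotics (A : (n : ℕ) → Fin n → ℕ) (m k : ℕ → ℕ)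
    (hka : ∀ n, ∑ i, A n i = k n)
    (hk : Tendsto (fun n : ℕ => (k n : ℝ) / Real.sqrt n) atTop atTop)
    (hreg : SomeRegime A m k) :
    Tendsto (fun n : ℕ => (n : ℝ) ^ 3 / (m n : ℝ) ^ 3 *
        ((∑ i, (A n i : ℝ) ^ 4) - (k n : ℝ) ^ 4 / (n : ℝ) ^ 3)) atTop (𝓝 0) := by
  have hk0 : ∀ᶠ n in atTop, 0 < k n := by
    filter_upwards [hk.eventually_gt_atTop 0] with n hn
    rcases Nat.eq_zero_or_pos (k n) with h | h
    · simp [h] at hn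
    · exact h
  obtain ⟨C, hC, hbd⟩ : ∃ C : ℝ, 0 < C ∧ ∀ᶠ n : ℕ in atTop,
      (k n : ℝ) * Real.sqrt n ≤ C * m n ∧ plantV n (A n) * (n : ℝ) ^ 2 ≤ C * m n := by
    rcases hreg with ⟨c, hc, h⟩ | ⟨lam, c, hl, hc, h⟩ | ⟨c, hc, h⟩
    · exact exists_const_of_ratio_limits A m k 0 c hk0 le_rfl hc h
    · exact exists_const_of_ratio_limits A m k lam c hk0 hl.le hc h
    · exact exists_const_of_hilly A m k c hk0 hc h
  have hlim : Tendsto (fun n : ℕ => 3 * C ^ 3 * (k n / Real.sqrt n : ℝ)⁻¹ +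
      8 * C ^ 3 * (n : ℝ)⁻¹) atTop (𝓝 0) := by
    simpa using (hk.inv_tendsto_atTop.const_mul (3 * C ^ 3)).add
      ((tendsto_inv_atTop_nhds_zero_nat (𝕜 := ℝ)).const_mul (8 * C ^ 3))
  refine squeeze_zero_norm' ?_ hlim
  filter_upwards [hk0, hbd, eventually_gt_atTop 0] with n h0 h1 hn
  exact abs_normalised_le hn (A n) (m n) (k n) (hka n) h0 hC h1.1 h1.2
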